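/- The zeta-regularized determinant of |Ã| equals 2: writing ζ_{|Ã|}(s) = 2·ζ(s, 1/2) for the analytic continuation of the spectral zeta function, one has ζ'_{|Ã|}(0) = −log 2 and hence det_ζ(|Ã|) := exp(−ζ'_{|Ã|}(0)) = 2. -/

import Mathlib

/-! By the distribution relation at level `2`, `ζ(s) + ζ(s, 1/2) = 2 ^ s ζ(s)`, so
`ζ(s, 1/2) = (2 ^ s - 1) ζ(s)`. As `2 ^ s - 1` vanishes at `s = 0`, the derivative there only sees
the value `ζ(0) = -1/2`, and not `ζ'(0)`. -/

open HurwitzZeta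

theorem sum_hurwitzZeta_toAddCircle (N : ℕ) [NeZero N] {s : ℂ} (hs : s ≠ 1) :
    ∑ j : ZMod N, hurwitzZeta (ZMod.toAddCircle j) s = (N : ℂ) ^ s * riemannZeta s := by
  have hN : (N : ℂ) ^ s ≠ 0 := by simp [Complex.cpow_eq_zero_iff, NeZero.ne N]
  -- The zeta function is the `L`-function of the additive character of `ZMod N` of frequency `0`.
  have hζ := ZMod.LFunction_stdAddChar_eq_expZeta (0 : ZMod N) s (Or.inr hs)
  simp only [ZMod.LFunction, zero_mul, AddChar.map_zero_eq_one, one_mul, map_zero,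
    expZeta_zero, Complex.cpow_neg] at hζ
  rw [← hζ, mul_inv_cancel_left₀ hN]

theorem hurwitzZeta_one_half {s : ℂ} (hs : s ≠ 1) :
    hurwitzZeta ((1 / 2 : ℝ) : UnitAddCircle) s = ((2 : ℂ) ^ s - 1) * riemannZeta s := by
  have hhalf : ZMod.toAddCircle (1 : ZMod 2) = ((1 / 2 : ℝ) : UnitAddCircle) := by
    simpa using ZMod.toAddCircle_intCast (N := 2) 1
  have hsum : hurwitzZeta (ZMod.toAddCircle (0 : ZMod 2)) s +
      hurwitzZeta (ZMod.toAddCircle (1 : ZMod 2)) s = (2 : ℂ) ^ s * riemannZeta s :=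
    (Fin.sum_univ_two fun j : ZMod 2 => hurwitzZeta (ZMod.toAddCircle j) s).symm.trans
      (sum_hurwitzZeta_toAddCircle 2 hs)
  rw [map_zero, hurwitzZeta_zero, hhalf] at hsum
  linear_combination hsum

theorem hasDerivAt_hurwitzZeta_one_half {s : ℂ} (hs : s ≠ 1) :
    HasDerivAt (hurwitzZeta ((1 / 2 : ℝ) : UnitAddCircle))
      ((2 : ℂ) ^ s * Complex.log 2 * riemannZeta s +
        ((2 : ℂ) ^ s - 1) * deriv riemannZeta s) s := by
  have hpow : HasDerivAt (fun z : ℂ => (2 : ℂ) ^ z - 1) ((2 : ℂ) ^ s * Complex.log 2) s := by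
    simpa using ((hasDerivAt_id s).const_cpow (Or.inl two_ne_zero)).sub_const 1
  refine (hpow.mul (differentiableAt_riemannZeta hs).hasDerivAt).congr_of_eventuallyEq ?_
  filter_upwards [eventually_ne_nhds hs] with z hz using hurwitzZeta_one_half hz

theorem hasDerivAt_hurwitzZeta_one_half_zero :
    HasDerivAt (hurwitzZeta ((1 / 2 : ℝ) : UnitAddCircle)) (-(Real.log 2 : ℂ) / 2) 0 := by
  convert hasDerivAt_hurwitzZeta_one_half zero_ne_one using 1
  rw [riemannZeta_zero, Complex.cpow_zero, ← Complex.ofReal_ofNat, ← Complex.ofReal_log zero_le_two]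
  ring

/-- The zeta-regularized determinant of `|Ã|` equals `2`: for the
spectral zeta function `ζ_{|Ã|}(s) = 2ζ(s,1/2)` (analytically continued), one has
`ζ'_{|Ã|}(0) = −log 2`, hence `det_ζ(|Ã|) = exp(−ζ'_{|Ã|}(0)) = 2`. -/
theorem zeta_determinant_eq_two :
    deriv (fun s : ℂ => 2 * HurwitzZeta.hurwitzZeta ((1 / 2 : ℝ) : UnitAddCircle) s) 0 =
        -(Real.log 2 : ℂ) ∧
    Complex.exp
        (-(deriv (fun s : ℂ =>
            2 * HurwitzZeta.hurwitzZeta ((1 / 2 : ℝ) : UnitAddCircle) s) 0)) = 2 := by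
  have hderiv : deriv (fun s : ℂ =>
      2 * HurwitzZeta.hurwitzZeta ((1 / 2 : ℝ) : UnitAddCircle) s) 0 = -(Real.log 2 : ℂ) := by
    rw [(hasDerivAt_hurwitzZeta_one_half_zero.const_mul 2).deriv]
    ring
  refine ⟨hderiv, ?_⟩
  rw [hderiv, neg_neg, ← Complex.ofReal_exp, Real.exp_log two_pos, Complex.ofReal_ofNat]
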